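/- Let D be a finite digraph, k ≥ 1 an integer, T ⊆ V(D) with |T| = 2k−1, and B_T the T-bramble. For any X, Z ⊆ V(D): Z is a hitting set of the complement bramble B̄_T(X) if and only if Z is a (T \ X, k−1)-balanced separator in the digraph D \ X. -/

import Mathlib

/-- A digraph on vertex type `V`, given by its adjacency relation
(loops are allowed; parallel edges are irrelevant here). -/
structure Dgraph (V : Type) where
  Adj : V → V → Prop

namespace Dgraph

variable {V : Type}

/-- There is a directed walk from `u` to `v` in `D` using only vertices of `S`. -/
def ReachIn (D : Dgraph V) (S : Set V) (u v : V) : Prop :=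
  u ∈ S ∧ v ∈ S ∧ Relation.ReflTransGen (fun a b => a ∈ S ∧ b ∈ S ∧ D.Adj a b) u v

/-- The subdigraph of `D` induced on `S` is strongly connected. -/
def StronglyConnectedOn (D : Dgraph V) (S : Set V) : Prop :=
  ∀ u ∈ S, ∀ v ∈ S, D.ReachIn S u v

/-- `C` is the vertex set of a strong component of the subdigraph of `D` induced on `A`,
i.e. a maximal subset of `A` inducing a strongly connected subdigraph. -/
def IsStrongComponentOn (D : Dgraph V) (A C : Set V) : Prop :=
  C ⊆ A ∧ D.StronglyConnectedOn C ∧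
    ∀ C' : Set V, C ⊆ C' → C' ⊆ A → D.StronglyConnectedOn C' → C' = C

/-- `Z` is a `(T, r)`-balanced separator of `D`: every strong component of `D \ Z`
contains at most `r` vertices of `T`. -/
def IsBalancedSeparator (D : Dgraph V) (T : Set V) (r : ℕ) (Z : Set V) : Prop :=
  ∀ C : Set V, D.IsStrongComponentOn Zᶜ C → (C ∩ T).ncard ≤ r

/-- `T` is `(k, r)`-linked in `D`: every `(T, r)`-balanced separator has size at least `k + 1`. -/
def IsLinked (D : Dgraph V) (T : Set V) (k r : ℕ) : Prop :=
  ∀ Z : Set V, D.IsBalancedSeparator T r Z → k + 1 ≤ Z.ncard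

/-- `β` is a haven of order `k` in `D`: it assigns to every `Z` with `|Z| ≤ k - 1`
the vertex set of a strong component of `D \ Z`, monotonically. -/
def IsHaven (D : Dgraph V) (k : ℕ) (β : Set V → Set V) : Prop :=
  (∀ Z : Set V, Z.ncard < k → D.IsStrongComponentOn Zᶜ (β Z)) ∧
  (∀ Z Z' : Set V, Z.ncard < k → Z' ⊆ Z → β Z ⊆ β Z')

/-- A bramble in `D`: a family of (vertex sets of) strongly connected subdigraphs
any two of which touch. -/
def IsBramble (D : Dgraph V) (ℬ : Set (Set V)) : Prop :=
  (∀ B ∈ ℬ, D.StronglyConnectedOn B) ∧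
  ∀ B ∈ ℬ, ∀ B' ∈ ℬ,
    (B ∩ B').Nonempty ∨
      ((∃ u ∈ B, ∃ v ∈ B', D.Adj u v) ∧ (∃ u ∈ B', ∃ v ∈ B, D.Adj u v))

/-- `C` is a hitting set of the family `ℬ`. -/
def IsHittingSet (ℬ : Set (Set V)) (C : Set V) : Prop :=
  ∀ B ∈ ℬ, (C ∩ B).Nonempty

/-- The order of a bramble: the minimum size of a hitting set. -/
noncomputable def brambleOrder (ℬ : Set (Set V)) : ℕ :=
  sInf {n : ℕ | ∃ C : Set V, IsHittingSet ℬ C ∧ C.ncard = n}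

/-- The `T`-bramble with threshold `g`: all induced strongly connected subdigraphs
containing at least `g` vertices of `T`. -/
def TBramble (D : Dgraph V) (T : Set V) (g : ℕ) : Set (Set V) :=
  {B : Set V | D.StronglyConnectedOn B ∧ g ≤ (B ∩ T).ncard}

/-- The restricted bramble `ℬ(X)`: elements of `ℬ` intersecting `X`. -/
def restrictedBramble (ℬ : Set (Set V)) (X : Set V) : Set (Set V) :=
  {B ∈ ℬ | (B ∩ X).Nonempty}

/-- The complement bramble `ℬ̄(X)`: elements of `ℬ` disjoint from `X`. -/
def complementBramble (ℬ : Set (Set V)) (X : Set V) : Set (Set V) :=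
  {B ∈ ℬ | B ∩ X = ∅}

/-- A directed path in `D`, as a duplicate-free list of consecutively adjacent vertices. -/
def IsPath (D : Dgraph V) (P : List V) : Prop :=
  P.Nodup ∧ P.Chain' D.Adj

/-- A directed path in `D` starting in `A` and ending in `B`. -/
def IsPathFromTo (D : Dgraph V) (P : List V) (A B : Set V) : Prop :=
  D.IsPath P ∧ ∃ h : P ≠ [], P.head h ∈ A ∧ P.getLast h ∈ B

/-- There are `n` pairwise vertex-disjoint directed paths from `A` to `B` in `D`. -/
def HasDisjointPaths (D : Dgraph V) (A B : Set V) (n : ℕ) : Prop :=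
  ∃ Ps : Fin n → List V, (∀ i, D.IsPathFromTo (Ps i) A B) ∧
    ∀ i j, i ≠ j → ∀ v, v ∈ Ps i → v ∉ Ps j

/-- `A` is well-linked in `D`. -/
def WellLinked (D : Dgraph V) (A : Set V) : Prop :=
  ∀ X Y : Set V, X ⊆ A → Y ⊆ A → Disjoint X Y → X.ncard = Y.ncard →
    D.HasDisjointPaths X Y X.ncard

end Dgraph

namespace Dgraph

/-- `Z` is an `(S, r)`-balanced separator in the subdigraph of `D` induced on `A`:
every strong component of `D[A] \ Z` contains at most `r` vertices of `S`. -/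
def IsBalancedSeparatorOn {V : Type} (D : Dgraph V) (A S : Set V) (r : ℕ) (Z : Set V) :
    Prop :=
  ∀ C : Set V, D.IsStrongComponentOn (A \ Z) C → (C ∩ S).ncard ≤ r

end Dgraph

/-!
A set `Z` fails to hit the complement bramble exactly when some strongly connected subset of
`V(D) \ (X ∪ Z)` contains at least `k` vertices of `T`. Such a subset can be enlarged to a strong
component of `D \ (X ∪ Z)`, which contains no fewer vertices of `T`. Since a union of a chain of
strongly connected sets is strongly connected, Zorn's lemma provides this component even when `D`
is infinite.
-/

namespace Dgraph

variable {V : Type} {D : Dgraph V}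

theorem ReachIn.mono {S S' : Set V} (hS : S ⊆ S') {u v : V} (h : D.ReachIn S u v) :
    D.ReachIn S' u v :=
  ⟨hS h.1, hS h.2.1, h.2.2.lift id fun _ _ ⟨ha, hb, hab⟩ => ⟨hS ha, hS hb, hab⟩⟩

theorem stronglyConnectedOn_sUnion_of_directedOn {c : Set (Set V)} (hc : DirectedOn (· ⊆ ·) c)
    (h : ∀ S ∈ c, D.StronglyConnectedOn S) : D.StronglyConnectedOn (⋃₀ c) := by
  rintro u ⟨S, hS, hu⟩ v ⟨S', hS', hv⟩
  obtain ⟨W, hW, hSW, hS'W⟩ := hc S hS S' hS'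
  exact (h W hW u (hSW hu) v (hS'W hv)).mono (Set.subset_sUnion_of_mem hW)

theorem isStrongComponentOn_iff_maximal {A C : Set V} :
    D.IsStrongComponentOn A C ↔ Maximal (fun B => B ⊆ A ∧ D.StronglyConnectedOn B) C := by
  rw [maximal_subset_iff, IsStrongComponentOn, and_assoc]
  exact and_congr_right' <| and_congr_right'
    ⟨fun h C' hC' hCC' => (h C' hCC' hC'.1 hC'.2).symm,
      fun h C' hCC' hA hC' => (h ⟨hA, hC'⟩ hCC').symm⟩

theorem StronglyConnectedOn.exists_isStrongComponentOn_superset {A B : Set V} (hBA : B ⊆ A)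
    (hB : D.StronglyConnectedOn B) : ∃ C, B ⊆ C ∧ D.IsStrongComponentOn A C := by
  simp only [isStrongComponentOn_iff_maximal]
  refine zorn_subset_nonempty {C | C ⊆ A ∧ D.StronglyConnectedOn C} (fun c hc hchain _ => ?_)
    B ⟨hBA, hB⟩
  exact ⟨⋃₀ c, ⟨Set.sUnion_subset fun S hS => (hc hS).1,
    stronglyConnectedOn_sUnion_of_directedOn hchain.directedOn fun S hS => (hc hS).2⟩,
    fun _ => Set.subset_sUnion_of_mem⟩

theorem isBalancedSeparatorOn_iff_forall_stronglyConnectedOn {A S Z : Set V} (hS : S.Finite)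
    {r : ℕ} : D.IsBalancedSeparatorOn A S r Z ↔
      ∀ B ⊆ A \ Z, D.StronglyConnectedOn B → (B ∩ S).ncard ≤ r := by
  refine ⟨fun h B hBA hB => ?_, fun h C hC => h C hC.1 hC.2.1⟩
  obtain ⟨C, hBC, hC⟩ := hB.exists_isStrongComponentOn_superset hBA
  calc (B ∩ S).ncard ≤ (C ∩ S).ncard :=
        Set.ncard_le_ncard (Set.inter_subset_inter_left S hBC) (hS.inter_of_right C)
    _ ≤ r := h C hC

theorem isHittingSet_complementBramble_iff {ℬ : Set (Set V)} {X Z : Set V} :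
    IsHittingSet (complementBramble ℬ X) Z ↔ ∀ B ⊆ Xᶜ \ Z, B ∉ ℬ := by
  have avoids_iff (B : Set V) : B ⊆ Xᶜ \ Z ↔ B ∩ X = ∅ ∧ ¬(Z ∩ B).Nonempty := by
    rw [Set.subset_sdiff, Set.subset_compl_iff_disjoint_right, Set.disjoint_iff_inter_eq_empty,
      Set.not_nonempty_iff_eq_empty, Set.inter_comm Z, Set.disjoint_iff_inter_eq_empty]
  simp only [IsHittingSet, complementBramble, Set.mem_sep_iff, avoids_iff]
  grind

end Dgraph

open Dgraph in
theorem stmt7_general {V : Type} (D : Dgraph V) (r : ℕ) {T : Set V} (hT : T.Finite)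
    (X Z : Set V) :
    IsHittingSet (complementBramble (D.TBramble T (r + 1)) X) Z ↔
      D.IsBalancedSeparatorOn Xᶜ (T \ X) r Z := by
  rw [isHittingSet_complementBramble_iff,
    isBalancedSeparatorOn_iff_forall_stronglyConnectedOn hT.sdiff]
  refine forall₂_congr fun B hB => ?_
  have inter_sdiff : B ∩ (T \ X) = B ∩ T := by grind
  rw [inter_sdiff, TBramble, Set.mem_ofPred_eq, not_and, Nat.succ_le_iff, not_lt]

open Dgraph in
/-- `Z` is a hitting set of the complement bramble `B̄_T(X)` if and only if
`Z` is a `(T \ X, k-1)`-balanced separator in the digraph `D \ X`. -/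
theorem stmt7 {V : Type} [Finite V] (D : Dgraph V) (k : ℕ) (hk : 1 ≤ k) (T : Set V)
    (hT : T.ncard = 2 * k - 1) (X Z : Set V) :
    IsHittingSet (complementBramble (D.TBramble T k) X) Z ↔
      D.IsBalancedSeparatorOn Xᶜ (T \ X) (k - 1) Z := by
  obtain ⟨r, rfl⟩ := Nat.exists_eq_add_of_le' hk
  exact stmt7_general D r T.toFinite X Z
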